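/- arXiv:1203.1027 — 5 statements merged into one kernel-verified Lean document; each statement's English description precedes it below -/
import Mathlib

section
/- Let n ≥ 1 and let R be the group ring ℤ[ℤ^n] (equivalently, the Laurent polynomial ring in n variables over ℤ); for γ ∈ ℤ^n write e^γ for the corresponding basis element of R. Let α, β ∈ ℤ^n be linearly independent over ℚ and let P ∈ R. If (1 − e^α) divides (1 − e^β)·P in R, then (1 − e^α) divides P in R. -/
/-!
The map `R[G] → R[G ⧸ ⟨a⟩]` induced by the quotient map has kernel the multiples of `1 - e^a`, so
`1 - e^a ∣ (1 - e^b) * P` says that `1 - e^c` annihilates the image of `P`, where `c` is the image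
of `b`. If `c` has infinite order, then `1 - e^c` is regular: an element it annihilates has constant
coefficients along the infinite cosets of `⟨c⟩`, so finiteness of its support makes it zero. Hence
the image of `P` vanishes.
-/

section GroupAlgebra

open AddMonoidAlgebra

variable {R G : Type*} [Ring R]

theorem one_sub_single_dvd_one_sub_single_zsmul [AddGroup G] (a : G) (k : ℤ) :
    (1 - single a 1 : R[G]) ∣ 1 - single (k • a) 1 := by
  have dvd_nsmul (n : ℕ) : (1 - single a 1 : R[G]) ∣ 1 - single (n • a) 1 := by
    simpa only [single_pow, one_pow] using one_sub_dvd_one_sub_pow (single a 1 : R[G]) n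
  obtain ⟨n, rfl | rfl⟩ := k.eq_nat_or_neg
  · simpa only [natCast_zsmul] using dvd_nsmul n
  · have neg_eq : (1 - single (-(n : ℤ) • a) 1 : R[G]) =
        (1 - single (n • a) 1) * -single (-(n • a)) 1 := by
      simp [sub_mul, single_mul_single, one_def]
    simpa only [neg_eq] using (dvd_nsmul n).mul_right _

theorem one_sub_single_dvd_single_sub_single [AddCommGroup G] {a g h : G}
    (hgh : (g : G ⧸ AddSubgroup.zmultiples a) = h) (r : R) :
    (1 - single a 1 : R[G]) ∣ single g r - single h r := by
  obtain ⟨k, hk⟩ := AddSubgroup.mem_zmultiples_iff.mp (QuotientAddGroup.eq.mp hgh)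
  obtain rfl : h = k • a + g := by rw [hk]; abel
  have factor : (single g r - single (k • a + g) r : R[G]) =
      (1 - single (k • a) 1) * single g r := by
    rw [sub_mul, one_mul, single_mul_single, one_mul]
  rw [factor]
  exact (one_sub_single_dvd_one_sub_single_zsmul a k).mul_right _

theorem one_sub_single_dvd_sub_mapDomain_out_mk [AddCommGroup G] (a : G) (P : R[G]) :
    (1 - single a 1) ∣ P - mapDomain (Quotient.out : G ⧸ AddSubgroup.zmultiples a → G)
      (mapDomain (QuotientAddGroup.mk' (AddSubgroup.zmultiples a)) P) := by
  induction P using AddMonoidAlgebra.induction_linear with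
  | zero => simp
  | add P Q hP hQ =>
    rw [mapDomain_add, mapDomain_add, add_sub_add_comm]
    exact dvd_add hP hQ
  | single g r =>
    rw [mapDomain_single, mapDomain_single]
    exact one_sub_single_dvd_single_sub_single (QuotientAddGroup.out_eq' _).symm r

theorem one_sub_single_dvd_iff_mapDomainRingHom_mk'_eq_zero [AddCommGroup G] {a : G} {P : R[G]} :
    (1 - single a 1) ∣ P ↔
      mapDomainRingHom R (QuotientAddGroup.mk' (AddSubgroup.zmultiples a)) P = 0 := by
  constructor
  · rintro ⟨Q, rfl⟩
    have mk_a : (a : G ⧸ AddSubgroup.zmultiples a) = 0 :=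
      (QuotientAddGroup.eq_zero_iff a).mpr (AddSubgroup.mem_zmultiples a)
    simp only [map_mul, map_sub, map_one, mapDomainRingHom_apply, mapDomain_single,
      QuotientAddGroup.mk'_apply, mk_a, ← one_def, sub_self, zero_mul]
  · intro hP
    rw [mapDomainRingHom_apply] at hP
    simpa only [hP, mapDomain_zero, sub_zero] using one_sub_single_dvd_sub_mapDomain_out_mk a P

theorem isLeftRegular_one_sub_single [AddGroup G] {b : G} (hb : ¬IsOfFinAddOrder b) :
    IsLeftRegular (1 - single b 1 : R[G]) := by
  refine isLeftRegular_iff_right_eq_zero_of_mul.mpr fun Q hQ ↦ ?_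
  have single_mul_Q : single b 1 * Q = Q := by
    rwa [sub_mul, one_mul, sub_eq_zero, eq_comm] at hQ
  have single_nsmul_mul_Q (k : ℕ) : single (k • b) 1 * Q = Q := by
    simpa only [single_pow, one_pow, mul_left_iterate] using
      Function.iterate_fixed (f := (single b 1 * ·)) single_mul_Q k
  have coeff_nsmul_add (k : ℕ) (g : G) : Q.coeff (k • b + g) = Q.coeff g := by
    simpa only [coeff_single_mul_add, one_mul] using
      (congrArg (fun S : R[G] ↦ S.coeff (k • b + g)) (single_nsmul_mul_Q k)).symm
  ext g
  by_contra hg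
  have orbit_injective : Function.Injective fun k : ℕ ↦ k • b + g :=
    (add_left_injective g).comp (injective_nsmul_iff_not_isOfFinAddOrder.mpr hb)
  have orbit_subset : Set.range (fun k : ℕ ↦ k • b + g) ⊆ Q.coeff.support := by
    rintro _ ⟨k, rfl⟩
    simpa [coeff_nsmul_add] using hg
  exact Set.infinite_range_of_injective orbit_injective
    (Q.coeff.support.finite_toSet.subset orbit_subset)

theorem stmt0_general [AddCommGroup G] {a b : G}
    (hb : ¬IsOfFinAddOrder (b : G ⧸ AddSubgroup.zmultiples a)) {P : R[G]}
    (hdvd : (1 - single a 1) ∣ (1 - single b 1) * P) : (1 - single a 1) ∣ P := by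
  rw [one_sub_single_dvd_iff_mapDomainRingHom_mk'_eq_zero] at hdvd ⊢
  refine isLeftRegular_iff_right_eq_zero_of_mul.mp (isLeftRegular_one_sub_single hb) _ ?_
  simpa only [map_mul, map_sub, map_one, mapDomainRingHom_apply, mapDomain_single,
    QuotientAddGroup.mk'_apply] using hdvd

end GroupAlgebra

theorem not_isOfFinAddOrder_mk_of_linearIndependent {G : Type*} [AddCommGroup G] {a b : G}
    (hab : LinearIndependent ℤ ![a, b]) :
    ¬IsOfFinAddOrder (b : G ⧸ AddSubgroup.zmultiples a) := by
  rw [isOfFinAddOrder_iff_zsmul_eq_zero]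
  rintro ⟨k, hk, hkb⟩
  rw [← QuotientAddGroup.mk_zsmul, QuotientAddGroup.eq_zero_iff,
    AddSubgroup.mem_zmultiples_iff] at hkb
  obtain ⟨l, hl⟩ := hkb
  have relation : l • a + -k • b = 0 := by rw [hl, neg_smul, add_neg_cancel]
  exact hk (neg_eq_zero.mp (LinearIndependent.pair_iff.mp hab l (-k) relation).2)

theorem linearIndependent_int_of_intCast {K κ ι : Type*} [Ring K] [CharZero K] {v : κ → ι → ℤ}
    (hv : LinearIndependent K ((fun w i ↦ (w i : K)) ∘ v)) : LinearIndependent ℤ v := by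
  have smul_one_injective : Function.Injective fun m : ℤ ↦ m • (1 : K) := by
    simpa only [zsmul_one] using Int.cast_injective (α := K)
  exact .of_comp ((Int.castAddHom K).compLeft ι).toIntLinearMap
    (hv.restrict_scalars smul_one_injective)

/-- In the group ring `ℤ[ℤⁿ]` (Laurent polynomials), if `α, β ∈ ℤⁿ` are
linearly independent over `ℚ` and `(1 - e^α) ∣ (1 - e^β) * P`, then `(1 - e^α) ∣ P`. -/
theorem stmt0 (n : ℕ) (hn : 1 ≤ n) (α β : Fin n → ℤ)
    (hind : LinearIndependent ℚ
      ![(fun i => (α i : ℚ)), (fun i => (β i : ℚ))])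
    (P : AddMonoidAlgebra ℤ (Fin n → ℤ))
    (hdvd : (1 - AddMonoidAlgebra.single α (1 : ℤ)) ∣
      (1 - AddMonoidAlgebra.single β (1 : ℤ)) * P) :
    (1 - AddMonoidAlgebra.single α (1 : ℤ)) ∣ P := by
  have hind_int : LinearIndependent ℤ ![α, β] :=
    linearIndependent_int_of_intCast (K := ℚ) (by rwa [← FinVec.map_eq])
  exact stmt0_general (not_isOfFinAddOrder_mk_of_linearIndependent hind_int) hdvd
end

section
/- Let n ≥ 2 and let ν ∈ K_α(Γ) be the class ν(j) = z_j. Then the classes 1, ν, ν^2, …, ν^{n−1} form a basis of K_α(Γ) as a module over R. -/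
/-- The Laurent polynomial ring `R = ℤ[z₁^{±1},…,z_n^{±1}]`, realized as the group
algebra of `ℤⁿ` over `ℤ`. -/
abbrev Laur (n : ℕ) : Type := AddMonoidAlgebra ℤ (Fin n → ℤ)

/-- The variable `z_j ∈ R`. -/
noncomputable def Z (n : ℕ) (j : Fin n) : Laur n :=
  AddMonoidAlgebra.single (Pi.single j 1) 1

/-- Membership in `K_α(K_n)`: `(z_j − z_k) ∣ g(j) − g(k)` for all `j ≠ k`. -/
def IsKClass (n : ℕ) (g : Fin n → Laur n) : Prop :=
  ∀ j k : Fin n, j ≠ k → (Z n j - Z n k) ∣ g j - g k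

/-!
Each difference `zᵢ - zⱼ` is prime: it generates the kernel of the substitution `zⱼ ↦ zᵢ`, whose
target is a domain. For fixed `i` no two of these primes divide one another, so an element divisible
by each of them is divisible by their product, and this is exactly the divisibility that Newton
interpolation needs to stay inside the ring. Uniqueness is the Vandermonde determinant.
-/

section Interpolation

open Polynomial

variable {ι A : Type*}

theorem prod_dvd_of_prime_of_pairwise_not_dvd [CommMonoidWithZero A] {s : Finset ι} {f : ι → A}
    {a : A} (hprime : ∀ i ∈ s, Prime (f i))
    (hndvd : (s : Set ι).Pairwise fun i j => ¬ f i ∣ f j) (hdvd : ∀ i ∈ s, f i ∣ a) :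
    ∏ i ∈ s, f i ∣ a := by
  classical
  induction s using Finset.induction_on with
  | empty => simp
  | insert i s hi ih =>
    rw [Finset.coe_insert] at hndvd
    obtain ⟨hi_prime, hs_prime⟩ := Finset.forall_mem_insert .. |>.1 hprime
    obtain ⟨hi_dvd, hs_dvd⟩ := Finset.forall_mem_insert .. |>.1 hdvd
    obtain ⟨b, rfl⟩ := ih hs_prime (hndvd.mono (Set.subset_insert _ _)) hs_dvd
    have hi_not_dvd_prod : ¬ f i ∣ ∏ j ∈ s, f j := by
      rw [hi_prime.dvd_finsetProd_iff]
      rintro ⟨j, hj, hij⟩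
      exact hndvd (Set.mem_insert _ _) (Set.mem_insert_of_mem _ hj)
        (ne_of_mem_of_not_mem hj hi).symm hij
    rw [Finset.prod_insert hi, mul_comm]
    exact mul_dvd_mul_left _ ((hi_prime.dvd_or_dvd hi_dvd).resolve_left hi_not_dvd_prod)

variable [CommRing A]

theorem exists_mem_degreeLT_succ_eval_eq {s : Finset ι} {x g : ι → A} {m : ι} {p : A[X]}
    (hp : p ∈ degreeLT A s.card) (hpg : ∀ i ∈ s, p.eval (x i) = g i)
    (hdvd : ∏ i ∈ s, (x m - x i) ∣ g m - p.eval (x m)) :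
    ∃ q ∈ degreeLT A (s.card + 1), q.eval (x m) = g m ∧ ∀ i ∈ s, q.eval (x i) = g i := by
  nontriviality A
  obtain ⟨c, hc⟩ := hdvd
  refine ⟨p + c • Lagrange.nodal s x, add_mem ?_ (Submodule.smul_mem _ _ ?_), ?_, fun i hi => ?_⟩
  · exact degreeLT_mono (Nat.le_succ _) hp
  · rw [mem_degreeLT, Lagrange.degree_nodal]
    exact_mod_cast Nat.lt_succ_self _
  · rw [eval_add, eval_smul, Lagrange.eval_nodal, smul_eq_mul, mul_comm, ← hc]
    ring
  · rw [eval_add, eval_smul, Lagrange.eval_nodal_at_node hi, smul_zero, add_zero, hpg i hi]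

theorem exists_mem_degreeLT_card_eval_eq {x g : ι → A}
    (hprime : ∀ i j, i ≠ j → Prime (x i - x j))
    (hndvd : ∀ i j k, i ≠ k → j ≠ k → ¬ x i - x j ∣ x i - x k)
    (hg : ∀ i j, i ≠ j → x i - x j ∣ g i - g j) (s : Finset ι) :
    ∃ p ∈ degreeLT A s.card, ∀ i ∈ s, p.eval (x i) = g i := by
  classical
  induction s using Finset.induction_on with
  | empty => exact ⟨0, zero_mem _, by simp⟩
  | insert m s hm ih =>
    obtain ⟨p, hp, hpg⟩ := ih
    have hne : ∀ i ∈ s, m ≠ i := fun i hi => (ne_of_mem_of_not_mem hi hm).symm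
    have hdvd : ∀ i ∈ s, x m - x i ∣ g m - p.eval (x m) := fun i hi => by
      have h := dvd_sub (hg m i (hne i hi)) (sub_dvd_eval_sub (x m) (x i) p)
      rwa [hpg i hi, sub_sub_sub_cancel_right] at h
    have hprod : ∏ i ∈ s, (x m - x i) ∣ g m - p.eval (x m) :=
      prod_dvd_of_prime_of_pairwise_not_dvd (fun i hi => hprime m i (hne i hi))
        (fun i _ j hj hij => hndvd m i j (hne j hj) hij) hdvd
    simpa only [Finset.card_insert_of_notMem hm, Finset.forall_mem_insert] using
      exists_mem_degreeLT_succ_eval_eq hp hpg hprod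

theorem existsUnique_eq_sum_mul_pow [IsDomain A] {n : ℕ} {x g : Fin n → A}
    (hprime : ∀ i j, i ≠ j → Prime (x i - x j))
    (hndvd : ∀ i j k, i ≠ k → j ≠ k → ¬ x i - x j ∣ x i - x k)
    (hg : ∀ i j, i ≠ j → x i - x j ∣ g i - g j) :
    ∃! a : Fin n → A, g = fun j => ∑ k : Fin n, a k * x j ^ (k : ℕ) := by
  have hx : Function.Injective x := fun i j hij =>
    by_contra fun hne => (hprime i j hne).ne_zero (sub_eq_zero.2 hij)
  obtain ⟨p, hp, hpg⟩ := exists_mem_degreeLT_card_eval_eq hprime hndvd hg Finset.univ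
  rw [Finset.card_fin] at hp
  refine existsUnique_of_exists_of_unique ⟨degreeLTEquiv A n ⟨p, hp⟩, ?_⟩ fun a b ha hb => ?_
  · funext j
    rw [← hpg j (Finset.mem_univ j), eval_eq_sum_degreeLTEquiv hp]
  · refine sub_eq_zero.1 (Matrix.eq_zero_of_forall_index_sum_mul_pow_eq_zero hx fun j => ?_)
    simpa only [Pi.sub_apply, sub_mul, Finset.sum_sub_distrib, sub_eq_zero] using
      congrFun (ha.symm.trans hb) j

end Interpolation

section LaurentPolynomial

variable {k ι κ : Type*} [DecidableEq ι] [DecidableEq κ]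

section CommSemiring

variable [CommSemiring k]

variable (k) in
/-- The variable `zᵢ` of the Laurent polynomial ring `k[zᵢ^{±1} : i ∈ ι]`, realized as the
group algebra of `ι → ℤ`; over `k = ℤ` and `ι = Fin n` it is `Z n i`. -/
noncomputable def laurentVar (i : ι) : AddMonoidAlgebra k (ι → ℤ) :=
  AddMonoidAlgebra.single (Pi.single i 1) 1

theorem laurentVar_injective [Nontrivial k] :
    Function.Injective (laurentVar k : ι → AddMonoidAlgebra k (ι → ℤ)) := by
  intro i j h
  have hexp : (Pi.single i 1 : ι → ℤ) = Pi.single j 1 := AddMonoidAlgebra.of_injective h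
  simpa [Pi.single_apply] using congrFun hexp i

theorem laurent_algHom_ext [Finite ι] {B : Type*} [CommSemiring B] [Algebra k B]
    {φ ψ : AddMonoidAlgebra k (ι → ℤ) →ₐ[k] B}
    (h : ∀ i, φ (laurentVar k i) = ψ (laurentVar k i)) : φ = ψ := by
  have hexp : (φ : AddMonoidAlgebra k (ι → ℤ) →* B).comp (AddMonoidAlgebra.of k (ι → ℤ)) =
      (ψ : AddMonoidAlgebra k (ι → ℤ) →* B).comp (AddMonoidAlgebra.of k (ι → ℤ)) := by
    apply MonoidHom.toAdditiveRight.injective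
    ext i
    exact h i
  exact AddMonoidAlgebra.algHom_ext' hexp (Subsingleton.elim _ _)

/-- The substitution `zᵢ ↦ z_{f i}`, the Laurent analogue of `MvPolynomial.rename`. On exponent
vectors it is the linear map sending the `i`-th basis vector to the `f i`-th one. -/
noncomputable def laurentRename [Fintype ι] (f : ι → κ) :
    AddMonoidAlgebra k (ι → ℤ) →ₐ[k] AddMonoidAlgebra k (κ → ℤ) :=
  AddMonoidAlgebra.mapDomainAlgHom k k
    (Fintype.linearCombination ℤ fun i => (Pi.single (f i) 1 : κ → ℤ)).toAddMonoidHom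

@[simp]
theorem laurentRename_laurentVar [Fintype ι] (f : ι → κ) (i : ι) :
    laurentRename f (laurentVar k i) = laurentVar k (f i) := by
  simp [laurentRename, laurentVar]

end CommSemiring

variable [CommRing k]

theorem sub_laurentRename_mem [Fintype ι] {I : Ideal (AddMonoidAlgebra k (ι → ℤ))} {f : ι → ι}
    (hf : ∀ i, laurentVar k i - laurentVar k (f i) ∈ I) (p : AddMonoidAlgebra k (ι → ℤ)) :
    p - laurentRename f p ∈ I := by
  have hmk : Ideal.Quotient.mkₐ k I = (Ideal.Quotient.mkₐ k I).comp (laurentRename f) :=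
    laurent_algHom_ext fun i => by simpa using Ideal.Quotient.eq.2 (hf i)
  exact Ideal.Quotient.eq.1 (DFunLike.congr_fun hmk p)

theorem update_id_apply_value (i j : ι) : Function.update id j i i = i := by
  simp [Function.update_apply]

theorem laurentVar_sub_dvd_iff [Fintype ι] {i j : ι} {p : AddMonoidAlgebra k (ι → ℤ)} :
    laurentVar k i - laurentVar k j ∣ p ↔ laurentRename (Function.update id j i) p = 0 := by
  constructor
  · rintro ⟨q, rfl⟩
    rw [map_mul, map_sub, laurentRename_laurentVar, laurentRename_laurentVar,
      update_id_apply_value, Function.update_self, sub_self, zero_mul]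
  · intro hp
    rw [← Ideal.mem_span_singleton, ← sub_zero p, ← hp]
    refine sub_laurentRename_mem (fun l => ?_) p
    rw [Ideal.mem_span_singleton]
    obtain rfl | hl := eq_or_ne l j
    · simpa using (dvd_sub_comm (a := laurentVar k i - laurentVar k l)).1 dvd_rfl
    · simp [hl]

theorem prime_laurentVar_sub [Finite ι] [IsDomain k] {i j : ι} (hij : i ≠ j) :
    Prime (laurentVar k i - laurentVar k j) := by
  cases nonempty_fintype ι
  have hker : Ideal.span {laurentVar k i - laurentVar k j} =
      RingHom.ker (laurentRename (k := k) (Function.update id j i)) := by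
    ext p
    rw [Ideal.mem_span_singleton, laurentVar_sub_dvd_iff, RingHom.mem_ker]
  rw [← Ideal.span_singleton_prime (sub_ne_zero.2 (laurentVar_injective.ne hij)), hker]
  exact RingHom.ker_isPrime _

theorem laurentVar_sub_not_dvd [Finite ι] [Nontrivial k] {i j l : ι} (hil : i ≠ l) (hjl : j ≠ l) :
    ¬ laurentVar k i - laurentVar k j ∣ laurentVar k i - laurentVar k l := by
  cases nonempty_fintype ι
  rw [laurentVar_sub_dvd_iff, map_sub, laurentRename_laurentVar, laurentRename_laurentVar,
    update_id_apply_value, Function.update_of_ne hjl.symm, sub_eq_zero]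
  exact laurentVar_injective.ne hil

end LaurentPolynomial

theorem stmt7_general (k : Type*) [CommRing k] [IsDomain k] (n : ℕ) :
    (∀ e i j : Fin n, i ≠ j →
      laurentVar k i - laurentVar k j ∣ laurentVar k i ^ (e : ℕ) - laurentVar k j ^ (e : ℕ)) ∧
    (∀ g : Fin n → AddMonoidAlgebra k (Fin n → ℤ),
      (∀ i j, i ≠ j → laurentVar k i - laurentVar k j ∣ g i - g j) →
      ∃! a : Fin n → AddMonoidAlgebra k (Fin n → ℤ),
        g = fun j => ∑ e : Fin n, a e * laurentVar k j ^ (e : ℕ)) :=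
  ⟨fun _ _ _ _ => sub_dvd_pow_sub_pow _ _ _, fun _ hg =>
    existsUnique_eq_sum_mul_pow (fun _ _ => prime_laurentVar_sub)
      (fun _ _ _ => laurentVar_sub_not_dvd) hg⟩

/-- the classes `1, ν, ν², …, ν^{n−1}`, where `ν(j) = z_j`, form a basis of
`K_α(K_n)` as a module over `R`: each power is a `K`-class and every `K`-class has a
unique representation as an `R`-linear combination of them. -/
theorem stmt7 (n : ℕ) (hn : 2 ≤ n) :
    (∀ k : Fin n, IsKClass n (fun j => Z n j ^ (k : ℕ))) ∧
    (∀ g, IsKClass n g →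
      ∃! a : Fin n → Laur n, g = fun j => ∑ k : Fin n, a k * Z n j ^ (k : ℕ)) :=
  stmt7_general ℤ n
end

section
/- Let n ≥ 2 and let ψ : S → R be the injective ring homomorphism determined by ψ(y_j) = z_j for all j, whose image is the polynomial subring R_+ = ℤ[z_1,…,z_n] of R. Then the map Φ : H_α(Γ) → Maps({1,…,n}, R) given by Φ(f)(j) = ψ(f(j)) is an injective ring homomorphism whose image is contained in K_α(Γ), it satisfies Φ(q·f) = ψ(q)·Φ(f) for all q ∈ S and f ∈ H_α(Γ), and its image equals { g ∈ K_α(Γ) : g(j) ∈ R_+ for all j }. -/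
open MvPolynomial

/-- Membership in `H_α(K_n)`: `(y_j − y_k) ∣ f(j) − f(k)` for all `j ≠ k`. -/
def IsHClass (n : ℕ) (f : Fin n → MvPolynomial (Fin n) ℤ) : Prop :=
  ∀ j k : Fin n, j ≠ k → (X j - X k : MvPolynomial (Fin n) ℤ) ∣ f j - f k

/-- The ring homomorphism `ψ : S → R` determined by `ψ(y_j) = z_j`. -/
noncomputable def psi (n : ℕ) : MvPolynomial (Fin n) ℤ →+* Laur n :=
  (MvPolynomial.aeval (fun j => Z n j) : MvPolynomial (Fin n) ℤ →ₐ[ℤ] Laur n).toRingHom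

/-- The polynomial subring `R₊ = ℤ[z₁,…,z_n]` of `R`. -/
noncomputable def Rplus (n : ℕ) : Subring (Laur n) :=
  Subring.closure (Set.range (Z n))

/-- The map `Φ : Maps({1,…,n}, S) → Maps({1,…,n}, R)`, `Φ(f)(j) = ψ(f(j))`. -/
noncomputable def Phi (n : ℕ) (f : Fin n → MvPolynomial (Fin n) ℤ) : Fin n → Laur n :=
  fun j => psi n (f j)

/-!
The monomials `z_j` have `ℕ`-linearly independent exponents, so `ψ` is induced by an injective map
of exponent monoids and is itself injective. For the image of `Φ`, only the descent of divisibility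
from `R` to `S` is in question. The substitution `z_j ↦ z_k` is defined on all of `R`, because it
sends units to units; it restricts to `y_j ↦ y_k` on `S`, where its kernel is the ideal generated by
`y_j - y_k`. Hence if `z_j - z_k` divides `ψ p`, then `p` dies under `y_j ↦ y_k` and is divisible
by `y_j - y_k`.
-/

section Monomials

variable {ι A M : Type*} [AddCommMonoid M]

theorem aeval_single_eq_mapDomain_linearCombination [CommSemiring A] (v : ι → M)
    (p : MvPolynomial ι A) :
    aeval (fun i => AddMonoidAlgebra.single (v i) (1 : A)) p =
      AddMonoidAlgebra.mapDomain (Finsupp.linearCombination ℕ v) p := by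
  let onExponents : MvPolynomial ι A →ₐ[A] AddMonoidAlgebra A M :=
    AddMonoidAlgebra.mapDomainAlgHom A A (Finsupp.linearCombination ℕ v).toAddMonoidHom
  have hX (i : ι) : onExponents (X i) = AddMonoidAlgebra.single (v i) 1 :=
    AddMonoidAlgebra.mapDomain_single.trans (by simp)
  have heq : aeval (fun i => AddMonoidAlgebra.single (v i) (1 : A)) = onExponents :=
    algHom_ext fun i => by rw [aeval_X, hX]
  exact DFunLike.congr_fun heq p

theorem algebraicIndependent_single_of_linearIndependent [CommRing A] {v : ι → M}
    (hv : LinearIndependent ℕ v) :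
    AlgebraicIndependent A (fun i => AddMonoidAlgebra.single (v i) (1 : A)) := by
  intro p q hpq
  simp only [aeval_single_eq_mapDomain_linearCombination] at hpq
  exact AddMonoidAlgebra.mapDomain_injective hv hpq

end Monomials

section Substitution

variable {σ A B : Type*} [CommRing A]

theorem algHom_sub_mem_of_forall_X_sub_mem [CommRing B] [Algebra A B]
    {φ χ : MvPolynomial σ A →ₐ[A] B} {I : Ideal B} (h : ∀ i, φ (X i) - χ (X i) ∈ I)
    (p : MvPolynomial σ A) : φ p - χ p ∈ I := by
  have hquot : (Ideal.Quotient.mkₐ A I).comp φ = (Ideal.Quotient.mkₐ A I).comp χ :=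
    algHom_ext fun i => Ideal.Quotient.eq.2 (h i)
  exact Ideal.Quotient.eq.1 (DFunLike.congr_fun hquot p)

variable [DecidableEq σ]

theorem X_sub_X_dvd_sub_rename_update (j k : σ) (p : MvPolynomial σ A) :
    X j - X k ∣ p - rename (Function.update id j k) p := by
  rw [← Ideal.mem_span_singleton]
  refine algHom_sub_mem_of_forall_X_sub_mem (φ := AlgHom.id A _) (fun i => ?_) p
  rw [AlgHom.id_apply, rename_X, Ideal.mem_span_singleton]
  obtain rfl | hij := eq_or_ne i j
  · rw [Function.update_self]
  · rw [Function.update_of_ne hij, id, sub_self]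
    exact dvd_zero _

theorem X_sub_X_dvd_of_rename_update_eq_zero {j k : σ} {p : MvPolynomial σ A}
    (hp : rename (Function.update id j k) p = 0) : X j - X k ∣ p := by
  simpa only [hp, sub_zero] using X_sub_X_dvd_sub_rename_update j k p

end Substitution

theorem range_eq_closure_range_X {σ B : Type*} [CommRing B] (φ : MvPolynomial σ ℤ →+* B) :
    φ.range = Subring.closure (Set.range fun i => φ (X i)) := by
  have hrange : φ.toIntAlgHom.range = Algebra.adjoin ℤ (Set.range fun i => φ (X i)) := by
    rw [Algebra.adjoin_range_eq_range_aeval]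
    exact congrArg AlgHom.range (aeval_unique φ.toIntAlgHom)
  rw [Algebra.adjoin_int] at hrange
  exact congrArg Subalgebra.toSubring hrange

section Psi

variable {n m : ℕ}

@[simp]
theorem psi_X (j : Fin n) : psi n (X j) = Z n j :=
  aeval_X _ j

theorem psi_injective (n : ℕ) : Function.Injective (psi n) :=
  algebraicIndependent_single_of_linearIndependent
    ((Pi.linearIndependent_single_one (Fin n) ℤ).restrict_scalars' ℕ)

theorem range_psi (n : ℕ) : (psi n).range = Rplus n := by
  simp only [range_eq_closure_range_X, psi_X, Rplus]

/-- The ring homomorphism of Laurent polynomial rings sending `z_i` to `z_{r i}`, the Laurent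
counterpart of `MvPolynomial.rename`. It is induced by the map of exponent lattices sending the
`i`-th unit vector to the `r i`-th one. -/
noncomputable def laurRename (r : Fin n → Fin m) : Laur n →+* Laur m :=
  AddMonoidAlgebra.mapDomainRingHom ℤ
    (Fintype.linearCombination ℤ fun i => (Pi.single (r i) 1 : Fin m → ℤ)).toAddMonoidHom

@[simp]
theorem laurRename_Z (r : Fin n → Fin m) (i : Fin n) : laurRename r (Z n i) = Z m (r i) := by
  simp [laurRename, Z]

theorem laurRename_psi (r : Fin n → Fin m) (p : MvPolynomial (Fin n) ℤ) :
    laurRename r (psi n p) = psi m (rename r p) := by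
  have hcomp : (laurRename r).comp (psi n) = (psi m).comp (rename r).toRingHom :=
    ringHom_ext (fun a => by simp) (fun i => by simp)
  exact RingHom.congr_fun hcomp p

theorem Z_sub_Z_dvd_psi_iff {j k : Fin n} {p : MvPolynomial (Fin n) ℤ} :
    Z n j - Z n k ∣ psi n p ↔ X j - X k ∣ p := by
  refine ⟨fun hdvd => ?_, fun hdvd => by simpa using map_dvd (psi n) hdvd⟩
  have hZ : laurRename (Function.update id j k) (Z n j - Z n k) = 0 := by
    simp [Function.update_apply]
  have hpsi : psi n (rename (Function.update id j k) p) = 0 := by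
    rw [← laurRename_psi, ← zero_dvd_iff, ← hZ]
    exact map_dvd _ hdvd
  exact X_sub_X_dvd_of_rename_update_eq_zero ((map_eq_zero_iff _ (psi_injective n)).1 hpsi)

end Psi

section Phi

variable {n : ℕ}

theorem Phi_injective (n : ℕ) : Function.Injective (Phi n) :=
  (psi_injective n).comp_left

theorem Phi_smul (q : MvPolynomial (Fin n) ℤ) (f : Fin n → MvPolynomial (Fin n) ℤ) :
    Phi n (q • f) = psi n q • Phi n f := by
  ext1 j
  simp only [Phi, Pi.smul_apply, smul_eq_mul, map_mul]

theorem isKClass_Phi_iff {f : Fin n → MvPolynomial (Fin n) ℤ} :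
    IsKClass n (Phi n f) ↔ IsHClass n f := by
  simp only [IsKClass, IsHClass, Phi, ← map_sub, Z_sub_Z_dvd_psi_iff]

theorem forall_mem_Rplus_iff_exists_Phi_eq {g : Fin n → Laur n} :
    (∀ j, g j ∈ Rplus n) ↔ ∃ f, Phi n f = g := by
  simp only [← range_psi, RingHom.mem_range, Classical.skolem, funext_iff, Phi]

end Phi

/-- `ψ` is injective with image `R₊`; `Φ : H_α(Γ) → Maps({1,…,n}, R)` is an
injective ring homomorphism with image contained in `K_α(Γ)`, satisfying
`Φ(q·f) = ψ(q)·Φ(f)`, and its image is exactly `{g ∈ K_α(Γ) : g(j) ∈ R₊ for all j}`. -/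
theorem stmt8 (n : ℕ) (hn : 2 ≤ n) :
    Function.Injective (psi n) ∧
    (psi n).range = Rplus n ∧
    (∀ f g, Phi n (f + g) = Phi n f + Phi n g) ∧
    (∀ f g, Phi n (f * g) = Phi n f * Phi n g) ∧
    Phi n 1 = 1 ∧
    (∀ f g, IsHClass n f → IsHClass n g → Phi n f = Phi n g → f = g) ∧
    (∀ f, IsHClass n f → IsKClass n (Phi n f)) ∧
    (∀ (q : MvPolynomial (Fin n) ℤ) (f : Fin n → MvPolynomial (Fin n) ℤ),
      Phi n (q • f) = psi n q • Phi n f) ∧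
    (∀ g : Fin n → Laur n,
      (IsKClass n g ∧ ∀ j, g j ∈ Rplus n) ↔ ∃ f, IsHClass n f ∧ Phi n f = g) := by
  refine ⟨psi_injective n, range_psi n, map_add ((psi n).compLeft (Fin n)),
    map_mul ((psi n).compLeft (Fin n)), map_one ((psi n).compLeft (Fin n)),
    fun _ _ _ _ hfg => Phi_injective n hfg, fun _ => isKClass_Phi_iff.2,
    Phi_smul, fun g => ?_⟩
  rw [forall_mem_Rplus_iff_exists_Phi_eq]
  constructor
  · rintro ⟨hg, f, rfl⟩
    exact ⟨f, isKClass_Phi_iff.1 hg, rfl⟩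
  · rintro ⟨f, hf, rfl⟩
    exact ⟨isKClass_Phi_iff.2 hf, f, rfl⟩
end

section
/- Let n ≥ 1. For a multi-index I = (i_1,…,i_n) of non-negative integers, let C_I : S_{n+1} → R be C_I(σ) = ∏_{m=1}^n z_{σ(m)}^{i_m}, and let A_n = { I = (i_1,…,i_n) : 0 ≤ i_m ≤ n+1−m for each m }. Then each C_I belongs to K_α(Γ) and is S_{n+1}-invariant (C_I(w) = w·C_I(id) for all w), and the family { C_I : I ∈ A_n } is a basis of K_α(Γ) as a module over R. -/
/-- The action of `σ ∈ S_n` on `R` by the ring automorphism permuting the variables,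
`σ·z_i = z_{σ(i)}`. -/
noncomputable def permAut (n : ℕ) (σ : Equiv.Perm (Fin n)) : Laur n ≃ₐ[ℤ] Laur n :=
  AddMonoidAlgebra.domCongr ℤ ℤ
    { Equiv.piCongrLeft' (fun _ => ℤ) σ with map_add' := fun _ _ => rfl }

/-- Membership in `K_α(Γ)` for the permutahedron `Γ` (GKM graph of `Fl(ℂ^{n+1})`, vertex
set `S_{n+1}`, edges `σ ∼ σ(i j)` with label `z_{σ(i)} − z_{σ(j)}`). -/
def IsKPClass (n : ℕ) (h : Equiv.Perm (Fin (n + 1)) → Laur (n + 1)) : Prop :=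
  ∀ (σ : Equiv.Perm (Fin (n + 1))) (i j : Fin (n + 1)), i ≠ j →
    (Z (n + 1) (σ i) - Z (n + 1) (σ j)) ∣ h σ - h (σ * Equiv.swap i j)

/-- The class `C_I(σ) = ∏_{m=1}^n z_{σ(m)}^{i_m}`, for a multi-index `I = (i_1,…,i_n)`
(the index `m : Fin n` codes the letter `m+1 ∈ {1,…,n} ⊂ {1,…,n+1}`). -/
noncomputable def CI (n : ℕ) (I : Fin n → ℕ) (σ : Equiv.Perm (Fin (n + 1))) :
    Laur (n + 1) :=
  ∏ m : Fin n, Z (n + 1) (σ m.castSucc) ^ I m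

/-!
Fixing the first value `p = σ(1)` of a permutation turns a class over the labels `x` into a class
over the labels with `x p` removed, so by induction its restriction to the face `σ(1) = p` has an
expansion in the monomials not involving the first position, with coefficients `b p J`. Modulo
`x p - x q` the remaining labels stay distinct, hence the monomials stay independent, and comparing
adjacent vertices `σ` and `(p q)σ` gives `b p J ≡ b q J`. These congruences are exactly what
makes Newton interpolation of `p ↦ b p J` at the nodes `x p` possible without denominators, and the
coefficients of the interpolating polynomial are those of the expansion of the class.
Independence is an iterated Vandermonde argument.
-/

section Labels

variable {A ι κ : Type*} [CommRing A]

open Polynomial in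
theorem C_add_X_sub_C_mul_mem_degreeLT {k : ℕ} {Q : A[X]} (a c : A)
    (hQ : Q ∈ degreeLT A k) : C a + (X - C c) * Q ∈ degreeLT A (k + 1) := by
  rw [mem_degreeLT] at hQ ⊢
  rw [Nat.cast_succ, add_comm (k : WithBot ℕ)]
  refine (degree_add_le _ _).trans_lt (max_lt (degree_C_le.trans_lt ?_) ?_)
  · exact_mod_cast Nat.add_pos_left one_pos k
  · calc ((X - C c) * Q).degree ≤ 1 + Q.degree :=
          degree_mul_le_of_le (degree_X_sub_C_le c) le_rfl
      _ < 1 + k := WithBot.add_lt_add_left (by simp) hQ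

/-- A family of labels that is generic enough for GKM theory: the differences of two labels are
prime, and identifying two labels `x s` and `x t` identifies no others. -/
structure IsGKMFamily (x : ι → A) : Prop where
  prime_sub : ∀ ⦃s t⦄, s ≠ t → Prime (x s - x t)
  not_dvd_sub : ∀ ⦃s t u v⦄, s ≠ t → u ≠ v → u ≠ s → v ≠ s → ¬ x s - x t ∣ x u - x v

namespace IsGKMFamily

variable {x : ι → A}

theorem injective (hx : IsGKMFamily x) : Function.Injective x := fun s t hst => by
  by_contra hne
  exact (hx.prime_sub hne).ne_zero (sub_eq_zero.2 hst)

theorem comp (hx : IsGKMFamily x) {f : κ → ι} (hf : Function.Injective f) :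
    IsGKMFamily (x ∘ f) where
  prime_sub _ _ hst := hx.prime_sub (hf.ne hst)
  not_dvd_sub _ _ _ _ hst huv hus hvs :=
    hx.not_dvd_sub (hf.ne hst) (hf.ne huv) (hf.ne hus) (hf.ne hvs)

theorem dvd_sub_dividedDifference (hx : IsGKMFamily x) {f g : ι → A} {p s t : ι}
    (hsp : s ≠ p) (htp : t ≠ p) (hst : s ≠ t) (hf : x s - x t ∣ f s - f t)
    (hs : f s - f p = (x s - x p) * g s) (ht : f t - f p = (x t - x p) * g t) :
    x s - x t ∣ g s - g t := by
  have hmul : (x t - x p) * (g s - g t) = (f s - f t) - (x s - x t) * g s := by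
    linear_combination ht - hs
  have hdvd : x s - x t ∣ (x t - x p) * (g s - g t) :=
    hmul ▸ dvd_sub hf (dvd_mul_right _ _)
  exact ((hx.prime_sub hst).dvd_or_dvd hdvd).resolve_left
    (hx.not_dvd_sub hst htp hst.symm hsp.symm)

open Polynomial in
theorem exists_mem_degreeLT_eval_eq (hx : IsGKMFamily x) (s : Finset ι) (f : ι → A)
    (hf : (s : Set ι).Pairwise fun i j => x i - x j ∣ f i - f j) :
    ∃ P ∈ degreeLT A s.card, ∀ i ∈ s, P.eval (x i) = f i := by
  classical
  induction s using Finset.induction_on generalizing f with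
  | empty => exact ⟨0, zero_mem _, by simp⟩
  | insert p s hp ih =>
    have ne_p : ∀ {i}, i ∈ s → i ≠ p := fun hi hip => hp (hip ▸ hi)
    have exists_quotient : ∀ i, ∃ c, i ∈ s → f i - f p = (x i - x p) * c := fun i => by
      by_cases hi : i ∈ s
      · obtain ⟨c, hc⟩ := hf (by simp [hi]) (by simp) (ne_p hi)
        exact ⟨c, fun _ => hc⟩
      · exact ⟨0, fun h => absurd h hi⟩
    choose g hg using exists_quotient
    obtain ⟨Q, hQ, hQeval⟩ := ih g fun i hi j hj hij =>
      hx.dvd_sub_dividedDifference (ne_p hi) (ne_p hj) hij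
        (hf (Finset.mem_insert_of_mem hi) (Finset.mem_insert_of_mem hj) hij) (hg i hi) (hg j hj)
    refine ⟨C (f p) + (X - C (x p)) * Q, ?_, fun i hi => ?_⟩
    · rw [Finset.card_insert_of_notMem hp]
      exact C_add_X_sub_C_mul_mem_degreeLT _ _ hQ
    · rcases Finset.mem_insert.1 hi with rfl | hi
      · simp
      · simp only [eval_add, eval_C, eval_mul, eval_sub, eval_X, hQeval i hi]
        linear_combination -hg i hi

theorem exists_sum_mul_pow_eq [Fintype ι] (hx : IsGKMFamily x) (f : ι → A)
    (hf : Pairwise fun i j => x i - x j ∣ f i - f j) {k : ℕ} (hk : Fintype.card ι ≤ k) :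
    ∃ c : Fin k → A, ∀ i, ∑ j, c j * x i ^ (j : ℕ) = f i := by
  obtain ⟨P, hP, hPeval⟩ := hx.exists_mem_degreeLT_eval_eq Finset.univ f (hf.set_pairwise _)
  have hPk : P ∈ Polynomial.degreeLT A k := Polynomial.degreeLT_mono hk hP
  exact ⟨Polynomial.degreeLTEquiv A k ⟨P, hPk⟩, fun i => by
    rw [← Polynomial.eval_eq_sum_degreeLTEquiv, hPeval i (Finset.mem_univ i)]⟩

end IsGKMFamily

end Labels

section FlagClasses

open Equiv Equiv.Perm

variable {A : Type*} [CommRing A] {n : ℕ}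

/-- Membership in the GKM ring of the permutahedron with vertices `S_n`, where the edge between
`σ` and `σ (i j)` is labelled by `x (σ i) - x (σ j)`; `IsKPClass` is the case `x = Z`. -/
def IsGKMClass (x : Fin n → A) (h : Perm (Fin n) → A) : Prop :=
  ∀ (σ : Perm (Fin n)) (i j : Fin n), i ≠ j → x (σ i) - x (σ j) ∣ h σ - h (σ * swap i j)

/-- The monomial class `σ ↦ ∏ m, x (σ m) ^ I m` in all positions but the last;
`CI` is the case `x = Z`. -/
def flagMonomial (x : Fin (n + 1) → A) (I : Fin n → ℕ) (σ : Perm (Fin (n + 1))) : A :=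
  ∏ m : Fin n, x (σ m.castSucc) ^ I m

/-- The labels other than `x p`, in the order in which `Equiv.Perm.decomposeFin` lists the values
other than `p`: the label `x 0` takes the place of `x p`. -/
def deleteLabel (x : Fin (n + 1) → A) (p : Fin (n + 1)) : Fin n → A :=
  x ∘ fun k => swap 0 p k.succ

theorem swap_zero_succ_injective (p : Fin (n + 1)) :
    Function.Injective fun k : Fin n => swap 0 p k.succ :=
  (swap 0 p).injective.comp (Fin.succ_injective n)

theorem swap_zero_succ_ne (p : Fin (n + 1)) (k : Fin n) : swap 0 p k.succ ≠ p := by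
  rw [Ne, swap_apply_eq_iff, swap_apply_right]
  exact Fin.succ_ne_zero k

theorem sub_dvd_sub_mul_swap (x : Fin n → A) (σ : Perm (Fin n)) (i j l : Fin n) :
    x (σ i) - x (σ j) ∣ x (σ l) - x ((σ * swap i j) l) := by
  rw [Perm.mul_apply]
  rcases eq_or_ne l i with rfl | hli
  · simp
  rcases eq_or_ne l j with rfl | hlj
  · rw [swap_apply_right, ← neg_sub, neg_dvd]
  · simp [swap_apply_of_ne_of_ne hli hlj]

theorem isGKMClass_flagMonomial (x : Fin (n + 1) → A) (I : Fin n → ℕ) :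
    IsGKMClass x (flagMonomial x I) := fun σ i j _ => by
  rw [← Ideal.mem_span_singleton, ← SModEq.sub_mem]
  refine SModEq.prod fun m _ => SModEq.pow _ ?_
  rw [SModEq.sub_mem, Ideal.mem_span_singleton]
  exact sub_dvd_sub_mul_swap x σ i j m.castSucc

theorem map_flagMonomial {B : Type*} [CommRing B] (φ : A →+* B) (x : Fin (n + 1) → A)
    (I : Fin n → ℕ) (σ : Perm (Fin (n + 1))) :
    φ (flagMonomial x I σ) = flagMonomial (φ ∘ x) I σ := by
  simp [flagMonomial]

theorem flagMonomial_decomposeFin_symm (x : Fin (n + 2) → A) (I : Fin (n + 1) → ℕ)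
    (p : Fin (n + 2)) (e : Perm (Fin (n + 1))) :
    flagMonomial x I (decomposeFin.symm (p, e)) =
      x p ^ I 0 * flagMonomial (deleteLabel x p) (Fin.tail I) e := by
  simp only [flagMonomial, deleteLabel, Fin.prod_univ_succ, Fin.castSucc_zero,
    decomposeFin_symm_apply_zero, ← Fin.succ_castSucc, decomposeFin_symm_apply_succ,
    Function.comp_apply, Fin.tail]

theorem flagMonomial_cons_zero (x : Fin (n + 2) → A) (J : Fin n → ℕ) (p : Fin (n + 2))
    (e : Perm (Fin (n + 1))) :
    flagMonomial x (Fin.cons 0 J) (decomposeFin.symm (p, e)) =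
      flagMonomial (deleteLabel x p) J e := by
  rw [flagMonomial_decomposeFin_symm, Fin.cons_zero, pow_zero, one_mul, Fin.tail_cons]

theorem sum_mul_flagMonomial_decomposeFin_symm {d : Fin (n + 1) → ℕ}
    (a : ((m : Fin (n + 1)) → Fin (d m)) → A) (x : Fin (n + 2) → A)
    (p : Fin (n + 2)) (e : Perm (Fin (n + 1))) :
    ∑ I, a I * flagMonomial x (fun m => I m) (decomposeFin.symm (p, e)) =
      ∑ J : (m : Fin n) → Fin (d m.succ),
        (∑ i : Fin (d 0), a (Fin.cons i J) * x p ^ (i : ℕ)) *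
          flagMonomial (deleteLabel x p) (fun m => J m) e := by
  rw [← (Fin.consEquiv fun m => Fin (d m)).sum_comp, Fintype.sum_prod_type_right]
  refine Finset.sum_congr rfl fun J _ => ?_
  rw [Finset.sum_mul]
  refine Finset.sum_congr rfl fun i _ => ?_
  rw [flagMonomial_decomposeFin_symm]
  simp [Fin.consEquiv, Fin.tail_def, mul_assoc]

theorem linearIndependent_flagMonomial [IsDomain A] {d : Fin n → ℕ}
    (hd : ∀ m, d m + m ≤ n + 1) {x : Fin (n + 1) → A} (hx : Function.Injective x) :
    LinearIndependent A fun I : (m : Fin n) → Fin (d m) => flagMonomial x fun m => I m := by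
  induction n with
  | zero =>
    rw [linearIndependent_unique_iff]
    exact fun h => one_ne_zero (α := A) (by simpa [flagMonomial] using congrFun h 1)
  | succ n ih =>
    rw [Fintype.linearIndependent_iff]
    intro a ha I
    have coeff_eq_zero : ∀ p (J : (m : Fin n) → Fin (d m.succ)),
        ∑ i : Fin (d 0), a (Fin.cons i J) * x p ^ (i : ℕ) = 0 := by
      intro p
      have hd_tail : ∀ m : Fin n, d m.succ + m ≤ n + 1 := fun m =>
        Nat.le_of_succ_le_succ (hd m.succ)
      refine Fintype.linearIndependent_iff.1
        (ih hd_tail (hx.comp (swap_zero_succ_injective p))) _ (funext fun e => ?_)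
      have ha_face := congrFun ha (decomposeFin.symm (p, e))
      simp only [Finset.sum_apply, Pi.smul_apply, smul_eq_mul] at ha_face ⊢
      rwa [sum_mul_flagMonomial_decomposeFin_symm] at ha_face
    have hd_zero : d 0 ≤ n + 2 := hd 0
    have vandermonde : (fun i => a (Fin.cons i (Fin.tail I))) = 0 :=
      Matrix.eq_zero_of_forall_index_sum_mul_pow_eq_zero
        (hx.comp (Fin.castLE_injective hd_zero)) fun _ => coeff_eq_zero _ _
    simpa using congrFun vandermonde (I 0)

theorem decomposeFin_symm_mul_swap (p : Fin (n + 1)) (e : Perm (Fin n)) (i j : Fin n) :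
    decomposeFin.symm (p, e * swap i j) =
      decomposeFin.symm (p, e) * swap i.succ j.succ := by
  ext1 k
  refine Fin.cases ?_ (fun k => ?_) k
  · simp [swap_apply_of_ne_of_ne (Fin.succ_ne_zero i).symm (Fin.succ_ne_zero j).symm]
  · simp [(Fin.succ_injective n).swap_apply]

theorem exists_decomposeFin_symm_eq_mul_swap {p q : Fin (n + 1)} (hpq : p ≠ q)
    (e : Perm (Fin n)) :
    ∃ j ≠ 0, decomposeFin.symm (p, e) j = q ∧
      ∃ e', decomposeFin.symm (p, e) * swap 0 j = decomposeFin.symm (q, e') := by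
  obtain ⟨j, hj⟩ := (decomposeFin.symm (p, e)).surjective q
  obtain ⟨⟨r, e'⟩, he'⟩ := decomposeFin.symm.surjective (decomposeFin.symm (p, e) * swap 0 j)
  have hr : r = q := by simpa [hj] using DFunLike.congr_fun he' 0
  refine ⟨j, ?_, hj, e', by rw [← he', hr]⟩
  rintro rfl
  exact hpq (by simpa using hj)

theorem IsGKMClass.decomposeFin_symm {x : Fin (n + 1) → A} {h : Perm (Fin (n + 1)) → A}
    (hh : IsGKMClass x h) (p : Fin (n + 1)) :
    IsGKMClass (deleteLabel x p) fun e => h (decomposeFin.symm (p, e)) := fun e i j hij => by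
  simpa [deleteLabel, decomposeFin_symm_mul_swap] using
    hh (decomposeFin.symm (p, e)) i.succ j.succ ((Fin.succ_injective n).ne hij)

theorem exists_forall_isGKMClass_dvd_sub (x : Fin (n + 1) → A) {p q : Fin (n + 1)} (hpq : p ≠ q)
    (e : Perm (Fin n)) :
    ∃ e', ∀ h, IsGKMClass x h →
      x p - x q ∣ h (decomposeFin.symm (p, e)) - h (decomposeFin.symm (q, e')) := by
  obtain ⟨j, hj, hjq, e', he'⟩ := exists_decomposeFin_symm_eq_mul_swap hpq e
  refine ⟨e', fun h hh => ?_⟩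
  simpa [hjq, he'] using hh (decomposeFin.symm (p, e)) 0 j hj.symm

protected theorem IsGKMFamily.deleteLabel {x : Fin (n + 1) → A} (hx : IsGKMFamily x)
    (p : Fin (n + 1)) : IsGKMFamily (deleteLabel x p) :=
  hx.comp (swap_zero_succ_injective p)

theorem IsGKMFamily.injective_mk_comp_deleteLabel {x : Fin (n + 1) → A} (hx : IsGKMFamily x)
    {p q : Fin (n + 1)} (hpq : p ≠ q) :
    Function.Injective (Ideal.Quotient.mk (Ideal.span {x p - x q}) ∘ deleteLabel x p) := by
  intro u v huv
  by_contra hne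
  rw [Function.comp_apply, Function.comp_apply, Ideal.Quotient.eq,
    Ideal.mem_span_singleton] at huv
  exact hx.not_dvd_sub hpq ((swap_zero_succ_injective p).ne hne) (swap_zero_succ_ne p u)
    (swap_zero_succ_ne p v) huv

theorem IsGKMClass.map_faceCoeff_eq {B : Type*} [CommRing B] [IsDomain B]
    {x : Fin (n + 2) → A} {h : Perm (Fin (n + 2)) → A} (hh : IsGKMClass x h) {d : Fin n → ℕ}
    (hd : ∀ m, d m + m ≤ n + 1) {b : Fin (n + 2) → ((m : Fin n) → Fin (d m)) → A}
    (hb : ∀ p e, h (decomposeFin.symm (p, e)) =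
      ∑ J, b p J * flagMonomial (deleteLabel x p) (fun m => J m) e)
    {p q : Fin (n + 2)} (hpq : p ≠ q) (π : A →+* B) (hπ : π (x p) = π (x q))
    (hπ_inj : Function.Injective (π ∘ deleteLabel x p)) (J : (m : Fin n) → Fin (d m)) :
    π (b p J) = π (b q J) := by
  have π_eq_of_dvd : ∀ {u v}, x p - x q ∣ u - v → π u = π v := fun hdvd => by
    simpa [hπ, sub_eq_zero] using map_dvd π hdvd
  refine Fintype.linearIndependent_iffₛ.1 (linearIndependent_flagMonomial hd hπ_inj)
    (fun J => π (b p J)) (fun J => π (b q J)) (funext fun e => ?_) J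
  obtain ⟨e', he'⟩ := exists_forall_isGKMClass_dvd_sub x hpq e
  have monomial_congr : ∀ J : Fin n → ℕ, π (flagMonomial (deleteLabel x p) J e) =
      π (flagMonomial (deleteLabel x q) J e') := fun J => by
    rw [← flagMonomial_cons_zero, ← flagMonomial_cons_zero]
    exact π_eq_of_dvd (he' _ (isGKMClass_flagMonomial x (Fin.cons 0 J)))
  have class_congr := π_eq_of_dvd (he' h hh)
  simp only [hb, map_sum, map_mul, ← monomial_congr] at class_congr
  simpa [← map_flagMonomial] using class_congr

theorem IsGKMFamily.dvd_sub_faceCoeff {x : Fin (n + 2) → A} (hx : IsGKMFamily x)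
    {h : Perm (Fin (n + 2)) → A} (hh : IsGKMClass x h) {d : Fin n → ℕ}
    (hd : ∀ m, d m + m ≤ n + 1) {b : Fin (n + 2) → ((m : Fin n) → Fin (d m)) → A}
    (hb : ∀ p e, h (decomposeFin.symm (p, e)) =
      ∑ J, b p J * flagMonomial (deleteLabel x p) (fun m => J m) e)
    {p q : Fin (n + 2)} (hpq : p ≠ q) (J : (m : Fin n) → Fin (d m)) :
    x p - x q ∣ b p J - b q J := by
  have : (Ideal.span {x p - x q}).IsPrime :=
    Ideal.isPrime_span_singleton_of_prime (hx.prime_sub hpq)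
  rw [← Ideal.mem_span_singleton, ← Ideal.Quotient.eq]
  refine hh.map_faceCoeff_eq hd hb hpq _ ?_ (hx.injective_mk_comp_deleteLabel hpq) J
  exact Ideal.Quotient.eq.2 (Ideal.mem_span_singleton_self _)

theorem IsGKMFamily.exists_sum_mul_flagMonomial_eq {x : Fin (n + 1) → A} (hx : IsGKMFamily x)
    {d : Fin n → ℕ} (hd : ∀ m, d m + m = n + 1) {h : Perm (Fin (n + 1)) → A}
    (hh : IsGKMClass x h) :
    ∃ a : ((m : Fin n) → Fin (d m)) → A,
      ∀ σ, h σ = ∑ I, a I * flagMonomial x (fun m => I m) σ := by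
  induction n with
  | zero =>
    refine ⟨fun _ => h 1, fun σ => ?_⟩
    rw [Subsingleton.elim (α := Perm (Fin 1)) σ 1]
    simp [flagMonomial]
  | succ n ih =>
    have hd_tail : ∀ m : Fin n, d m.succ + m = n + 1 := fun m => Nat.succ.inj (hd m.succ)
    have hd_zero : d 0 = n + 2 := hd 0
    choose b hb using fun p =>
      ih (hx.deleteLabel p) hd_tail (hh.decomposeFin_symm p)
    choose c hc using fun J => hx.exists_sum_mul_pow_eq (fun p => b p J)
      (fun _ _ hpq => hx.dvd_sub_faceCoeff hh (fun m => (hd_tail m).le) hb hpq J)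
      (k := d 0) (by simp [hd_zero])
    refine ⟨fun I => c (Fin.tail I) (I 0), fun σ => ?_⟩
    obtain ⟨⟨p, e⟩, rfl⟩ := decomposeFin.symm.surjective σ
    simp only [sum_mul_flagMonomial_decomposeFin_symm, Fin.tail_cons, Fin.cons_zero, hc, hb]

theorem IsGKMFamily.existsUnique_sum_mul_flagMonomial_eq [IsDomain A] {x : Fin (n + 1) → A}
    (hx : IsGKMFamily x) {d : Fin n → ℕ} (hd : ∀ m, d m + m = n + 1)
    {h : Perm (Fin (n + 1)) → A} (hh : IsGKMClass x h) :
    ∃! a : ((m : Fin n) → Fin (d m)) → A,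
      h = fun σ => ∑ I, a I * flagMonomial x (fun m => I m) σ := by
  obtain ⟨a, ha⟩ := hx.exists_sum_mul_flagMonomial_eq hd hh
  refine ⟨a, funext ha, fun a' ha' => ?_⟩
  have independent := Fintype.linearIndependent_iffₛ.1
    (linearIndependent_flagMonomial (fun m => (hd m).le) hx.injective)
  refine funext (independent a' a (funext fun σ => ?_))
  simpa using (congrFun ha' σ).symm.trans (ha σ)

end FlagClasses

section Laurent

variable {k l : ℕ}

/-- The substitution `z_j ↦ z_{f(j)}` between Laurent polynomial rings. -/
noncomputable def substVar (f : Fin k → Fin l) : Laur k →+* Laur l :=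
  AddMonoidAlgebra.mapDomainRingHom ℤ
    (Fintype.linearCombination ℤ fun j => (Pi.single (f j) 1 : Fin l → ℤ)).toAddMonoidHom

theorem substVar_Z (f : Fin k → Fin l) (j : Fin k) : substVar f (Z k j) = Z l (f j) := by
  simp [substVar, Z, Fintype.linearCombination_apply_single]

theorem laur_ringHom_ext {B : Type*} [CommRing B] {φ ψ : Laur k →+* B}
    (h : ∀ j, φ (Z k j) = ψ (Z k j)) : φ = ψ := by
  refine AddMonoidAlgebra.ringHom_ext' (RingHom.ext_int _ _) ?_
  refine MonoidHom.toAdditiveRight.injective ?_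
  ext j
  exact h j

theorem Z_injective (k : ℕ) : Function.Injective (Z k) := fun s t hst => by
  have hsingle := AddMonoidAlgebra.single_left_injective one_ne_zero hst
  by_contra hne
  simpa [hne] using congrFun hsingle s

theorem ker_substVar_update (s t : Fin k) :
    RingHom.ker (substVar (Function.update id s t)) = Ideal.span {Z k s - Z k t} := by
  set φ := substVar (Function.update id s t)
  have φ_Z : ∀ j, φ (Z k j) = Z k (Function.update id s t j) := substVar_Z _
  refine le_antisymm (fun u hu => ?_) ?_
  · have mk_comp_φ : (Ideal.Quotient.mk (Ideal.span {Z k s - Z k t})).comp φ =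
        Ideal.Quotient.mk (Ideal.span {Z k s - Z k t}) := by
      refine laur_ringHom_ext fun j => ?_
      rw [RingHom.comp_apply, φ_Z]
      rcases eq_or_ne j s with rfl | hjs
      · rw [Function.update_self, eq_comm, Ideal.Quotient.eq]
        exact Ideal.mem_span_singleton_self _
      · rw [Function.update_of_ne hjs, id]
    rw [← Ideal.Quotient.eq_zero_iff_mem, ← mk_comp_φ, RingHom.comp_apply,
      RingHom.mem_ker.1 hu, map_zero]
  · rw [Ideal.span_singleton_le_iff_mem, RingHom.mem_ker, map_sub, φ_Z, φ_Z, sub_eq_zero]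
    rcases eq_or_ne t s with rfl | hts
    · rfl
    · simp [Function.update_of_ne hts]

theorem Z_sub_dvd_iff {s t : Fin k} {u : Laur k} :
    Z k s - Z k t ∣ u ↔ substVar (Function.update id s t) u = 0 := by
  rw [← Ideal.mem_span_singleton, ← ker_substVar_update, RingHom.mem_ker]

theorem isGKMFamily_Z (k : ℕ) : IsGKMFamily (Z k) where
  prime_sub s t hst := by
    rw [← Ideal.span_singleton_prime (sub_ne_zero.2 ((Z_injective k).ne hst)),
      ← ker_substVar_update]
    exact RingHom.ker_isPrime _
  not_dvd_sub s t u v _ huv hus hvs := by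
    rw [Z_sub_dvd_iff, map_sub, substVar_Z, substVar_Z, Function.update_of_ne hus,
      Function.update_of_ne hvs, sub_eq_zero]
    exact (Z_injective k).ne huv

theorem permAut_Z (σ : Equiv.Perm (Fin k)) (j : Fin k) : permAut k σ (Z k j) = Z k (σ j) := by
  unfold permAut Z
  rw [AddMonoidAlgebra.domCongr_single]
  congr 1
  funext i
  change (Pi.single j 1 : Fin k → ℤ) (σ.symm i) = _
  simp only [Pi.single_apply, Equiv.symm_apply_eq]

end Laurent

theorem stmt10_general {A : Type*} [CommRing A] [IsDomain A] {n : ℕ} {x : Fin (n + 1) → A}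
    (hx : IsGKMFamily x) (φ : Equiv.Perm (Fin (n + 1)) → A →+* A)
    (hφ : ∀ w j, φ w (x j) = x (w j)) :
    (∀ I : Fin n → ℕ, IsGKMClass x (flagMonomial x I)) ∧
    (∀ (I : Fin n → ℕ) (w : Equiv.Perm (Fin (n + 1))),
      flagMonomial x I w = φ w (flagMonomial x I 1)) ∧
    (∀ h, IsGKMClass x h →
      ∃! a : ((m : Fin n) → Fin (n + 1 - (m : ℕ))) → A,
        h = fun σ => ∑ I : (m : Fin n) → Fin (n + 1 - (m : ℕ)),
          a I * flagMonomial x (fun m => (I m : ℕ)) σ) := by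
  refine ⟨isGKMClass_flagMonomial x, fun I w => ?_, fun h hh => ?_⟩
  · simp [flagMonomial, hφ]
  · exact hx.existsUnique_sum_mul_flagMonomial_eq (fun m => by omega) hh

/-- each `C_I` is an `S_{n+1}`-invariant class in `K_α(Γ)`, and the family
`{C_I : I ∈ A_n}`, `A_n = {I : 0 ≤ i_m ≤ n+1−m}`, is a basis of `K_α(Γ)` over `R`
(the multi-indices with `i_m ≤ n+1−m`, `m = 1,…,n`, being coded as dependent functions
`I : (m : Fin n) → Fin (n+1−m)`). -/
theorem stmt10 (n : ℕ) (hn : 1 ≤ n) :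
    (∀ I : Fin n → ℕ, IsKPClass n (CI n I)) ∧
    (∀ (I : Fin n → ℕ) (w : Equiv.Perm (Fin (n + 1))),
      CI n I w = permAut (n + 1) w (CI n I 1)) ∧
    (∀ h, IsKPClass n h →
      ∃! a : ((m : Fin n) → Fin (n + 1 - (m : ℕ))) → Laur (n + 1),
        h = fun σ => ∑ I : (m : Fin n) → Fin (n + 1 - (m : ℕ)),
          a I * CI n (fun m => (I m : ℕ)) σ) := by
  exact stmt10_general (isGKMFamily_Z (n + 1)) (fun w => permAut (n + 1) w) permAut_Z
end

section
/- Let n ≥ 2. Let W = S_n act on R by permuting the variables, let W_K ≤ W be the stabilizer of the letter n (so W_K ≅ S_{n−1}), and identify the coset space W/W_K with {1,…,n} via wW_K ↦ w(n). Then the map k : R^{W_K} ⊗_{R^W} R → Maps({1,…,n}, R) determined on decomposable elements by k(f ⊗ g)(i) = (w·f)·g, where w ∈ W is any permutation with w(n) = i, is well defined (independent of the choice of w), is a ring homomorphism, and is a ring isomorphism onto K_α(K_n). -/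
open scoped TensorProduct

/-- The subring `R^W` of `W = S_n`-invariant Laurent polynomials. -/
noncomputable def Rsym (n : ℕ) : Subring (Laur n) where
  carrier := {f | ∀ σ : Equiv.Perm (Fin n), permAut n σ f = f}
  mul_mem' := fun {a b} ha hb σ => by rw [map_mul, ha σ, hb σ]
  one_mem' := fun σ => map_one _
  add_mem' := fun {a b} ha hb σ => by rw [map_add, ha σ, hb σ]
  zero_mem' := fun σ => map_zero _
  neg_mem' := fun {a} ha σ => by rw [map_neg, ha σ]

/-- The subring `R^{W_K}` of invariants under the stabilizer `W_K` of the letter `d`. -/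
noncomputable def RsymK (n : ℕ) (d : Fin n) : Subring (Laur n) where
  carrier := {f | ∀ σ : Equiv.Perm (Fin n), σ d = d → permAut n σ f = f}
  mul_mem' := fun {a b} ha hb σ hσ => by rw [map_mul, ha σ hσ, hb σ hσ]
  one_mem' := fun σ _ => map_one _
  add_mem' := fun {a b} ha hb σ hσ => by rw [map_add, ha σ hσ, hb σ hσ]
  zero_mem' := fun σ _ => map_zero _
  neg_mem' := fun {a} ha σ hσ => by rw [map_neg, ha σ hσ]

noncomputable instance (n : ℕ) (d : Fin n) : Algebra (Rsym n) (RsymK n d) :=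
  (Subring.inclusion (fun _ hf σ _ => hf σ : Rsym n ≤ RsymK n d)).toAlgebra

/-!
Both sides are parametrized by the polynomials `P ∈ R[X]` of degree `< n`.

For `K_α(K_n)`: the difference `z_j - z_k` generates the kernel of the substitution `z_j ↦ z_k`, so
for fixed `j` these differences are pairwise non-associated primes. Newton interpolation therefore
needs no denominators, and `h : {1, …, n} → R` lies in `K_α(K_n)` exactly when `h j = P(z_j)` for
some `P` of degree `< n`; this `P` is unique because the `z_j` are distinct.

For the tensor product: the orbit `j ↦ w f` (`w d = j`) of an element `f ∈ R^{W_K}` lies in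
`K_α(K_n)`, as transposing `z_j` and `z_k` changes nothing modulo `z_j - z_k`. Its interpolant is
`W`-invariant by uniqueness, so `f = P(z_d)` with `P ∈ R^W[X]` of degree `< n`. Consequently every
tensor is `P(z_d ⊗ 1)` for some `P ∈ R[X]` of degree `< n`, and `k` sends it to `(P(z_j))_j`.
-/

open Polynomial

section Interpolation

variable {ι : Type*}

lemma prod_dvd_of_prime {M : Type*} [CommMonoidWithZero M] {p : ι → M} {x : M} (s : Finset ι)
    (hp : ∀ i ∈ s, Prime (p i)) (hndvd : ∀ i ∈ s, ∀ j ∈ s, i ≠ j → ¬ p i ∣ p j)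
    (hx : ∀ i ∈ s, p i ∣ x) : ∏ i ∈ s, p i ∣ x := by
  induction s using Finset.cons_induction with
  | empty => simp
  | cons a s ha ih =>
    simp only [Finset.forall_mem_cons] at hp hndvd hx
    obtain ⟨q, rfl⟩ := ih hp.2 (fun i hi => (hndvd.2 i hi).2) hx.2
    have hprod : ¬ p a ∣ ∏ i ∈ s, p i := by
      rw [hp.1.dvd_finsetProd_iff]
      rintro ⟨i, hi, hdvd⟩
      exact hndvd.1.2 i hi (fun h => ha (h ▸ hi)) hdvd
    have hq : p a ∣ q := (hp.1.dvd_or_dvd hx.1).resolve_left hprod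
    rw [Finset.prod_cons, mul_comm]
    exact mul_dvd_mul_left _ hq

variable {A : Type*} [CommRing A] [Nontrivial A] {v : ι → A}

lemma exists_degree_lt_eval_eq_of_sub_dvd_sub
    (hprime : ∀ i j, i ≠ j → Prime (v i - v j))
    (hndvd : ∀ i j k, i ≠ k → j ≠ k → ¬ v i - v j ∣ v i - v k)
    {h : ι → A} (hh : ∀ i j, i ≠ j → v i - v j ∣ h i - h j) (s : Finset ι) :
    ∃ P : A[X], P.degree < s.card ∧ ∀ j ∈ s, P.eval (v j) = h j := by
  induction s using Finset.cons_induction with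
  | empty => exact ⟨0, by simp⟩
  | cons a s ha ih =>
    obtain ⟨P, hP, hPs⟩ := ih
    have hne : ∀ j ∈ s, a ≠ j := fun j hj haj => ha (haj ▸ hj)
    have hdvd : ∏ j ∈ s, (v a - v j) ∣ h a - P.eval (v a) := by
      refine prod_dvd_of_prime s (fun j hj => hprime a j (hne j hj))
        (fun j _ k hk hjk => hndvd a j k (hne k hk) hjk) fun j hj => ?_
      have hsub := dvd_sub (hh a j (hne j hj)) (P.sub_dvd_eval_sub (v a) (v j))
      rwa [hPs j hj, sub_sub_sub_cancel_right] at hsub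
    obtain ⟨c, hc⟩ := hdvd
    refine ⟨P + c • Lagrange.nodal s v, ?_, fun j hj => ?_⟩
    · have hcard : (s.card : WithBot ℕ) < (Finset.cons a s ha).card := by
        rw [Finset.card_cons]
        exact_mod_cast s.card.lt_succ_self
      have hnodal : (c • Lagrange.nodal s v).degree ≤ s.card :=
        (degree_smul_le _ _).trans Lagrange.degree_nodal.le
      exact (degree_add_le _ _).trans_lt (max_lt (hP.trans hcard) (hnodal.trans_lt hcard))
    · rw [eval_add, eval_smul, smul_eq_mul]
      rcases Finset.mem_cons.1 hj with rfl | hj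
      · rw [Lagrange.eval_nodal, mul_comm, ← hc, add_sub_cancel]
      · rw [Lagrange.eval_nodal_at_node hj, mul_zero, add_zero, hPs j hj]

end Interpolation

section TensorProduct

variable {A S B : Type*} [CommRing A] [CommRing S] [CommRing B] [Algebra A S] [Algebra A B]

variable (A B) in
/-- The value `P(s ⊗ 1) ∈ S ⊗[A] B` of a polynomial `P` with coefficients in `B`, where `B` acts
through the right tensor factor. -/
noncomputable def tensorEval (s : S) : B[X] →+* S ⊗[A] B :=
  eval₂RingHom (Algebra.TensorProduct.includeRight : B →ₐ[A] S ⊗[A] B).toRingHom (s ⊗ₜ 1)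

lemma tensorEval_C (s : S) (b : B) : tensorEval A B s (C b) = 1 ⊗ₜ b :=
  eval₂_C _ _

lemma tensorEval_map_algebraMap (s : S) (P : A[X]) :
    tensorEval A B s (P.map (algebraMap A B)) = aeval s P ⊗ₜ 1 := by
  have hcomp : (Algebra.TensorProduct.includeRight : B →ₐ[A] S ⊗[A] B).toRingHom.comp
      (algebraMap A B) = algebraMap A (S ⊗[A] B) :=
    AlgHom.comp_algebraMap (Algebra.TensorProduct.includeRight : B →ₐ[A] S ⊗[A] B)
  have heval : tensorEval A B s (P.map (algebraMap A B)) = aeval (s ⊗ₜ[A] (1 : B)) P := by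
    rw [tensorEval, coe_eval₂RingHom, eval₂_map, hcomp, aeval_def]
  rw [heval]
  exact aeval_algHom_apply Algebra.TensorProduct.includeLeft s P

lemma map_tensorEval {T : Type*} [CommRing T] (φ : S ⊗[A] B →+* T) (s : S) (P : B[X]) :
    φ (tensorEval A B s P) =
      P.eval₂ (φ.comp (Algebra.TensorProduct.includeRight : B →ₐ[A] S ⊗[A] B).toRingHom)
        (φ (s ⊗ₜ 1)) :=
  hom_eval₂ _ _ _ _

lemma exists_degree_lt_tensorEval_eq {s : S} {m : ℕ}
    (hs : ∀ x : S, ∃ P : A[X], P.degree < m ∧ aeval s P = x) (t : S ⊗[A] B) :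
    ∃ P : B[X], P.degree < m ∧ tensorEval A B s P = t := by
  induction t using TensorProduct.induction_on with
  | zero => exact ⟨0, by simp, map_zero _⟩
  | add x y hx hy =>
    obtain ⟨P, hP, rfl⟩ := hx
    obtain ⟨Q, hQ, rfl⟩ := hy
    exact ⟨P + Q, (degree_add_le _ _).trans_lt (max_lt hP hQ), map_add _ _ _⟩
  | tmul x b =>
    obtain ⟨P, hP, rfl⟩ := hs x
    refine ⟨b • P.map (algebraMap A B),
      ((degree_smul_le _ _).trans degree_map_le).trans_lt hP, ?_⟩
    rw [smul_eq_C_mul, map_mul, tensorEval_C, tensorEval_map_algebraMap,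
      Algebra.TensorProduct.tmul_mul_tmul, one_mul, mul_one]

end TensorProduct

namespace Laur

variable {m n : ℕ}

lemma ringHom_ext {B : Type*} [CommRing B] {F G : Laur n →+* B}
    (h : ∀ i, F (Z n i) = G (Z n i)) : F = G := by
  -- Restricted to monomials, `F` and `G` are group homomorphisms `ℤⁿ → Bˣ`, hence determined by
  -- their values on the standard basis.
  let monomialUnits (H : Laur n →+* B) : (Fin n → ℤ) →+ Additive Bˣ :=
    MonoidHom.toAdditiveRight
      ((H : Laur n →* B).comp (AddMonoidAlgebra.of ℤ (Fin n → ℤ))).toHomUnits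
  have hunits : monomialUnits F = monomialUnits G := by
    ext i
    exact h i
  refine AddMonoidAlgebra.ringHom_ext (fun r => ?_) fun a => ?_
  · have hr : (AddMonoidAlgebra.single 0 r : Laur n) = (r : Laur n) := rfl
    rw [hr, map_intCast, map_intCast]
  · exact congrArg (fun u => ((Additive.toMul u : Bˣ) : B)) (DFunLike.congr_fun hunits a)

lemma Z_injective : Function.Injective (Z n) := fun i j h => by
  have hsingle := AddMonoidAlgebra.single_left_injective (R := ℤ) one_ne_zero h
  simpa [Pi.single_apply] using congrFun hsingle i

/-- The ring homomorphism `z_i ↦ z_{φ(i)}` attached to a map `φ` of indices. -/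
noncomputable def rename (φ : Fin m → Fin n) : Laur m →+* Laur n :=
  AddMonoidAlgebra.mapDomainRingHom ℤ
    (Fintype.linearCombination ℤ fun i => (Pi.single (φ i) 1 : Fin n → ℤ))

lemma rename_Z (φ : Fin m → Fin n) (i : Fin m) : rename φ (Z m i) = Z n (φ i) := by
  simp [rename, Z]

lemma permAut_Z (σ : Equiv.Perm (Fin n)) (i : Fin n) : permAut n σ (Z n i) = Z n (σ i) := by
  rw [Z, permAut, AddMonoidAlgebra.domCongr_single]
  exact congrArg (AddMonoidAlgebra.single · 1) (Pi.single_comp_equiv σ.symm i 1)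

lemma permAut_mul (σ τ : Equiv.Perm (Fin n)) (f : Laur n) :
    permAut n (σ * τ) f = permAut n σ (permAut n τ f) := by
  have hcomp : (permAut n (σ * τ) : Laur n →+* Laur n) =
      (permAut n σ : Laur n →+* Laur n).comp (permAut n τ : Laur n →+* Laur n) :=
    ringHom_ext fun i => by simp [permAut_Z]
  exact DFunLike.congr_fun hcomp f

lemma rename_permAut (φ : Fin n → Fin m) (σ : Equiv.Perm (Fin n)) (f : Laur n) :
    rename φ (permAut n σ f) = rename (φ ∘ σ) f := by
  have hcomp : (rename φ).comp (permAut n σ : Laur n →+* Laur n) = rename (φ ∘ σ) :=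
    ringHom_ext fun i => by simp [permAut_Z, rename_Z]
  exact DFunLike.congr_fun hcomp f

lemma Z_sub_Z_dvd_sub_rename_update (j k : Fin n) (f : Laur n) :
    Z n j - Z n k ∣ f - rename (Function.update id j k) f := by
  let q := Ideal.Quotient.mk (Ideal.span {Z n j - Z n k})
  have hjk : q (Z n j) = q (Z n k) :=
    Ideal.Quotient.eq.2 (Ideal.mem_span_singleton_self _)
  have hq : q = q.comp (rename (Function.update id j k)) := ringHom_ext fun i => by
    rcases eq_or_ne i j with rfl | hij
    · simpa [rename_Z] using hjk
    · simp [rename_Z, hij]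
  rw [← Ideal.mem_span_singleton, ← Ideal.Quotient.eq]
  exact DFunLike.congr_fun hq f

lemma Z_sub_Z_dvd_iff (j k : Fin n) (f : Laur n) :
    Z n j - Z n k ∣ f ↔ rename (Function.update id j k) f = 0 := by
  refine ⟨?_, fun h => by simpa [h] using Z_sub_Z_dvd_sub_rename_update j k f⟩
  rintro ⟨g, rfl⟩
  have hk : Function.update id j k k = k := by simp [Function.update_apply]
  rw [map_mul, map_sub, rename_Z, rename_Z, Function.update_self, hk, sub_self, zero_mul]

lemma prime_Z_sub_Z {j k : Fin n} (hjk : j ≠ k) : Prime (Z n j - Z n k) := by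
  have hker : Ideal.span {Z n j - Z n k} = RingHom.ker (rename (Function.update id j k)) := by
    ext f
    rw [Ideal.mem_span_singleton, Z_sub_Z_dvd_iff, RingHom.mem_ker]
  rw [← Ideal.span_singleton_prime (sub_ne_zero.2 (Z_injective.ne hjk)), hker]
  exact RingHom.ker_isPrime _

lemma not_Z_sub_Z_dvd_Z_sub_Z {i j k : Fin n} (hik : i ≠ k) (hjk : j ≠ k) :
    ¬ Z n i - Z n j ∣ Z n i - Z n k := by
  rw [Z_sub_Z_dvd_iff, map_sub, rename_Z, rename_Z, Function.update_self,
    Function.update_of_ne hik.symm, sub_eq_zero]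
  exact Z_injective.ne hjk

lemma Z_sub_Z_dvd_sub_permAut_swap (j k : Fin n) (f : Laur n) :
    Z n j - Z n k ∣ f - permAut n (Equiv.swap j k) f := by
  have hupdate : Function.update id j k ∘ Equiv.swap j k = Function.update id j k := by
    ext i
    grind [Function.update_apply]
  rw [Z_sub_Z_dvd_iff, map_sub, rename_permAut, hupdate, sub_self]

lemma exists_degree_lt_eval_Z_eq {h : Fin n → Laur n} (hh : IsKClass n h) :
    ∃ P : (Laur n)[X], P.degree < n ∧ ∀ j, P.eval (Z n j) = h j := by
  simpa using exists_degree_lt_eval_eq_of_sub_dvd_sub (fun _ _ => prime_Z_sub_Z)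
    (fun _ _ _ => not_Z_sub_Z_dvd_Z_sub_Z) hh Finset.univ

lemma isKClass_eval_Z (P : (Laur n)[X]) : IsKClass n fun j => P.eval (Z n j) :=
  fun _ _ _ => P.sub_dvd_eval_sub _ _

lemma eq_of_degree_lt_of_eval_Z_eq {P Q : (Laur n)[X]} (hP : P.degree < n) (hQ : Q.degree < n)
    (h : ∀ j, P.eval (Z n j) = Q.eval (Z n j)) : P = Q :=
  eq_of_degrees_lt_of_eval_index_eq Finset.univ Z_injective.injOn (by simpa using hP)
    (by simpa using hQ) fun j _ => h j

lemma permAut_eq_of_apply_eq {d : Fin n} {f : Laur n} (hf : f ∈ RsymK n d)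
    {v w : Equiv.Perm (Fin n)} (h : v d = w d) : permAut n v f = permAut n w f := by
  have hfix : permAut n (w⁻¹ * v) f = f := hf _ (by simp [h])
  calc permAut n v f = permAut n (w * (w⁻¹ * v)) f := by rw [mul_inv_cancel_left]
    _ = permAut n w f := by rw [permAut_mul, hfix]

variable (d : Fin n)

/-- The `W`-orbit of `f ∈ R^{W_K}`, indexed by `W / W_K ≅ {1, …, n}`: its `j`-th entry is `w · f`
for any `w` with `w(d) = j`, here the transposition of `d` and `j`. -/
noncomputable def orbitMap : RsymK n d →ₐ[Rsym n] (Fin n → Laur n) where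
  toRingHom := RingHom.pi fun j =>
    (permAut n (Equiv.swap d j) : Laur n →+* Laur n).comp (RsymK n d).subtype
  commutes' r := funext fun j => r.2 (Equiv.swap d j)

lemma orbitMap_apply_perm (f : RsymK n d) (w : Equiv.Perm (Fin n)) :
    orbitMap d f (w d) = permAut n w f :=
  permAut_eq_of_apply_eq f.2 (Equiv.swap_apply_left d (w d))

lemma orbitMap_apply_self (f : RsymK n d) : orbitMap d f d = f :=
  (orbitMap_apply_perm d f 1).trans (f.2 1 rfl)

lemma permAut_orbitMap (σ : Equiv.Perm (Fin n)) (f : RsymK n d) (j : Fin n) :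
    permAut n σ (orbitMap d f j) = orbitMap d f (σ j) := by
  obtain ⟨w, rfl⟩ := MulAction.exists_smul_eq (Equiv.Perm (Fin n)) d j
  simp only [Equiv.Perm.smul_def]
  rw [orbitMap_apply_perm, ← permAut_mul, ← Equiv.Perm.mul_apply, orbitMap_apply_perm]

lemma isKClass_orbitMap (f : RsymK n d) : IsKClass n (orbitMap d f) := fun j k _ => by
  simpa [permAut_orbitMap] using Z_sub_Z_dvd_sub_permAut_swap j k (orbitMap d f j)

/-- The variable `z_d`, as an element of `R^{W_K}`. -/
noncomputable def stabilizedVar : RsymK n d :=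
  ⟨Z n d, fun σ h => by rw [permAut_Z, h]⟩

lemma orbitMap_stabilizedVar (j : Fin n) : orbitMap d (stabilizedVar d) j = Z n j :=
  (permAut_Z _ _).trans (congrArg (Z n) (Equiv.swap_apply_left d j))

lemma coeff_mem_Rsym_of_permAut_eval_Z {P : (Laur n)[X]} (hP : P.degree < n)
    (h : ∀ σ j, permAut n σ (P.eval (Z n j)) = P.eval (Z n (σ j))) (i : ℕ) :
    P.coeff i ∈ Rsym n := by
  intro σ
  have hmap : P.map (permAut n σ : Laur n →+* Laur n) = P := by
    refine eq_of_degree_lt_of_eval_Z_eq (degree_map_le.trans_lt hP) hP fun j => ?_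
    obtain ⟨j, rfl⟩ := σ.surjective j
    rw [← h, ← permAut_Z]
    exact eval_map_apply (permAut n σ : Laur n →+* Laur n) (Z n j)
  simpa using congrArg (coeff · i) hmap

lemma exists_degree_lt_aeval_stabilizedVar_eq (f : RsymK n d) :
    ∃ P : (Rsym n)[X], P.degree < n ∧ aeval (stabilizedVar d) P = f := by
  obtain ⟨P, hPdeg, hP⟩ := exists_degree_lt_eval_Z_eq (isKClass_orbitMap d f)
  have hequivariant : ∀ σ j, permAut n σ (P.eval (Z n j)) = P.eval (Z n (σ j)) := fun σ j => by
    rw [hP, hP, permAut_orbitMap]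
  have hcoeffs : (P.coeffs : Set (Laur n)) ⊆ Rsym n := fun a ha => by
    obtain ⟨i, -, rfl⟩ := mem_coeffs_iff.1 ha
    exact coeff_mem_Rsym_of_permAut_eval_Z hPdeg hequivariant i
  refine ⟨P.toSubring (Rsym n) hcoeffs, by rwa [degree_toSubring], Subtype.ext ?_⟩
  calc ((aeval (stabilizedVar d) (P.toSubring (Rsym n) hcoeffs) : RsymK n d) : Laur n)
      = (P.toSubring (Rsym n) hcoeffs).eval₂ (Rsym n).subtype (Z n d) :=
        hom_eval₂ _ _ (RsymK n d).subtype _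
    _ = P.eval (Z n d) := by rw [← eval_map, map_toSubring]
    _ = f := by rw [hP, orbitMap_apply_self]

/-- The homomorphism `k : R^{W_K} ⊗_{R^W} R → Maps({1, …, n}, R)`. -/
noncomputable def kMap : RsymK n d ⊗[Rsym n] Laur n →ₐ[Rsym n] (Fin n → Laur n) :=
  Algebra.TensorProduct.productMap (orbitMap d) (Pi.constAlgHom (Rsym n) (Fin n) (Laur n))

lemma kMap_tmul (f : RsymK n d) (g : Laur n) (j : Fin n) :
    kMap d (f ⊗ₜ g) j = orbitMap d f j * g :=
  rfl

lemma kMap_tensorEval (P : (Laur n)[X]) :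
    kMap d (tensorEval (Rsym n) (Laur n) (stabilizedVar d) P) = fun j => P.eval (Z n j) := by
  funext j
  let kj : RsymK n d ⊗[Rsym n] Laur n →+* Laur n := (Pi.evalRingHom _ j).comp (kMap d).toRingHom
  have hright : kj.comp (Algebra.TensorProduct.includeRight :
      Laur n →ₐ[Rsym n] RsymK n d ⊗[Rsym n] Laur n).toRingHom = RingHom.id _ := by
    refine RingHom.ext fun g => (kMap_tmul d 1 g j).trans ?_
    rw [map_one, Pi.one_apply, one_mul, RingHom.id_apply]
  have hvar : kj (stabilizedVar d ⊗ₜ 1) = Z n j := by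
    refine (kMap_tmul d _ 1 j).trans ?_
    rw [orbitMap_stabilizedVar, mul_one]
  exact (map_tensorEval kj _ P).trans (by rw [hright, hvar, eval₂_id])

lemma exists_degree_lt_tensorEval_stabilizedVar_eq (t : RsymK n d ⊗[Rsym n] Laur n) :
    ∃ P : (Laur n)[X], P.degree < n ∧ tensorEval (Rsym n) (Laur n) (stabilizedVar d) P = t :=
  exists_degree_lt_tensorEval_eq (exists_degree_lt_aeval_stabilizedVar_eq d) t

lemma kMap_injective : Function.Injective (kMap d) := fun s t hst => by
  obtain ⟨P, hPdeg, rfl⟩ := exists_degree_lt_tensorEval_stabilizedVar_eq d s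
  obtain ⟨Q, hQdeg, rfl⟩ := exists_degree_lt_tensorEval_stabilizedVar_eq d t
  rw [kMap_tensorEval, kMap_tensorEval] at hst
  rw [eq_of_degree_lt_of_eval_Z_eq hPdeg hQdeg (congrFun hst)]

lemma range_kMap : Set.range (kMap d) = {h | IsKClass n h} := by
  ext h
  constructor
  · rintro ⟨t, rfl⟩
    obtain ⟨P, -, rfl⟩ := exists_degree_lt_tensorEval_stabilizedVar_eq d t
    rw [kMap_tensorEval]
    exact isKClass_eval_Z P
  · intro hh
    obtain ⟨P, -, hP⟩ := exists_degree_lt_eval_Z_eq hh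
    exact ⟨_, (kMap_tensorEval d P).trans (funext hP)⟩

end Laur

theorem stmt13_general {n : ℕ} (d : Fin n) :
    ∃ k : (RsymK n d ⊗[Rsym n] Laur n) →+* (Fin n → Laur n),
      (∀ (f : RsymK n d) (g : Laur n) (w : Equiv.Perm (Fin n)),
        k (f ⊗ₜ g) (w d) = permAut n w (f : Laur n) * g) ∧
      Function.Injective k ∧
      Set.range k = {h | IsKClass n h} := by
  refine ⟨(Laur.kMap d).toRingHom, fun f g w => ?_, Laur.kMap_injective d, Laur.range_kMap d⟩
  rw [← Laur.orbitMap_apply_perm]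
  exact Laur.kMap_tmul d f g (w d)

set_option synthInstance.maxHeartbeats 1000000 in
/-- with `W = S_n` acting on `R`, `W_K` the stabilizer of the letter `n`
(coded by `⟨n−1,_⟩ : Fin n`), and `W/W_K ≅ {1,…,n}` via `w ↦ w(n)`, there is a
(necessarily unique, hence well-defined) ring homomorphism
`k : R^{W_K} ⊗_{R^W} R → Maps({1,…,n}, R)` with `k(f ⊗ g)(w(n)) = (w·f)·g` for all
`w ∈ W`, and it is a ring isomorphism onto `K_α(K_n)`. -/
theorem stmt13 (n : ℕ) (hn : 2 ≤ n) (d : Fin n) (hd : (d : ℕ) = n - 1) :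
    ∃ k : (RsymK n d ⊗[Rsym n] Laur n) →+* (Fin n → Laur n),
      (∀ (f : RsymK n d) (g : Laur n) (w : Equiv.Perm (Fin n)),
        k (f ⊗ₜ g) (w d) = permAut n w (f : Laur n) * g) ∧
      Function.Injective k ∧
      Set.range k = {h | IsKClass n h} :=
  stmt13_general d
end
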